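/- arXiv:1306.2701 — 3 statements merged into one kernel-verified Lean document; each statement's English description precedes it below -/
import Mathlib

section
/- Let α > 0, 0 ≤ W_L < W_H, and β, γ > 0 satisfy e^{(W_L−W_H)α} < β/γ < e^{(W_H−W_L)α}. Define ĉ(Q) = β e^{−α(Q−W_L)^+} + γ e^{−α(W_H−Q)^+} for Q ≥ 0, where (x)^+ = max(x,0), and define Q° = (log β − log γ)/(2α) + (W_L + W_H)/2. Then Q° ∈ (W_L, W_H), the restriction of ĉ to the interval [W_L, W_H] attains its minimum uniquely at Q°, and the minimum value is ĉ(Q°) = 2√(βγ) e^{−α(W_H−W_L)/2}. -/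
open Real

/-!
On `[W_L, W_H]` both positive parts are inactive and the two exponents have the constant sum
`-α (W_H - W_L)`. Factoring out the geometric mean of the two summands therefore leaves a constant
multiple of a hyperbolic cosine: `ĉ(Q) = 2 √(βγ) e^{-α(W_H-W_L)/2} cosh (α (Q - Q°))`.
Since `cosh` exceeds `1` everywhere but at `0`, the minimum is at `Q°`, and taking logarithms turns
the bounds on `β / γ` into `W_L < Q° < W_H`.
-/

theorem exp_add_exp_eq_two_mul_exp_mul_cosh (x y : ℝ) :
    exp x + exp y = 2 * exp ((x + y) / 2) * cosh ((x - y) / 2) := by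
  have hx : exp x = exp ((x + y) / 2) * exp ((x - y) / 2) := by rw [← exp_add]; ring_nf
  have hy : exp y = exp ((x + y) / 2) * exp (-((x - y) / 2)) := by rw [← exp_add]; ring_nf
  rw [hx, hy, cosh_eq]
  ring

theorem mul_exp_add_mul_exp_eq_sqrt_mul_cosh {b c : ℝ} (hb : 0 < b) (hc : 0 < c) (x y : ℝ) :
    b * exp x + c * exp y =
      2 * √(b * c) * exp ((x + y) / 2) * cosh ((x - y + (log b - log c)) / 2) := by
  have hsqrt : √(b * c) = exp ((log b + log c) / 2) := by
    rw [exp_half, exp_add, exp_log hb, exp_log hc]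
  have hmean : exp ((log b + x + (log c + y)) / 2) = √(b * c) * exp ((x + y) / 2) := by
    rw [hsqrt, ← exp_add]
    ring_nf
  calc b * exp x + c * exp y
      = exp (log b + x) + exp (log c + y) := by rw [exp_add, exp_add, exp_log hb, exp_log hc]
    _ = 2 * exp ((log b + x + (log c + y)) / 2) * cosh ((log b + x - (log c + y)) / 2) :=
        exp_add_exp_eq_two_mul_exp_mul_cosh _ _
    _ = 2 * √(b * c) * exp ((x + y) / 2) * cosh ((x - y + (log b - log c)) / 2) := by
        rw [hmean]
        ring_nf

/-- The per-user per-stage queue cost `ĉ(Q)`: the interruption price `β` is discounted once `Q`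
exceeds the interruption threshold `W_L`, the buffer price `γ` as long as `Q` stays below the target
buffer size `W_H`. -/
noncomputable def queueCost (α W_L W_H β γ Q : ℝ) : ℝ :=
  β * exp (-α * max (Q - W_L) 0) + γ * exp (-α * max (W_H - Q) 0)

/-- The queue length `Q°` of equation (13). When it lies in `[W_L, W_H]`, it is the point of that
interval at which the two summands of `queueCost` are equal. -/
noncomputable def optimalQueueLength (α W_L W_H β γ : ℝ) : ℝ :=
  (log β - log γ) / (2 * α) + (W_L + W_H) / 2

section QueueCost

variable {α W_L W_H β γ : ℝ}

theorem mul_optimalQueueLength (hα : α ≠ 0) :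
    α * optimalQueueLength α W_L W_H β γ = (α * (W_L + W_H) + (log β - log γ)) / 2 := by
  unfold optimalQueueLength
  field_simp
  ring

theorem optimalQueueLength_mem_Ioo_iff (hα : 0 < α) (hβ : 0 < β) (hγ : 0 < γ) :
    optimalQueueLength α W_L W_H β γ ∈ Set.Ioo W_L W_H ↔
      exp ((W_L - W_H) * α) < β / γ ∧ β / γ < exp ((W_H - W_L) * α) := by
  have hratio : 0 < β / γ := div_pos hβ hγ
  rw [← lt_log_iff_exp_lt hratio, ← log_lt_iff_lt_exp hratio, log_div hβ.ne' hγ.ne']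
  rw [Set.mem_Ioo, ← mul_lt_mul_iff_right₀ hα, ← mul_lt_mul_iff_right₀ (c := W_H) hα,
    mul_optimalQueueLength hα.ne']
  constructor <;> rintro ⟨hleft, hright⟩ <;> constructor <;> linarith

theorem queueCost_eq_mul_cosh (hα : α ≠ 0) (hβ : 0 < β) (hγ : 0 < γ) {Q : ℝ}
    (hQ : Q ∈ Set.Icc W_L W_H) :
    queueCost α W_L W_H β γ Q =
      2 * √(β * γ) * exp (-α * (W_H - W_L) / 2) *
        cosh (α * (Q - optimalQueueLength α W_L W_H β γ)) := by
  have hmean : (-α * (Q - W_L) + -α * (W_H - Q)) / 2 = -α * (W_H - W_L) / 2 := by ring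
  have hdiff : (-α * (Q - W_L) - -α * (W_H - Q) + (log β - log γ)) / 2 =
      -(α * (Q - optimalQueueLength α W_L W_H β γ)) := by
    linear_combination -mul_optimalQueueLength (W_L := W_L) (W_H := W_H) (β := β) (γ := γ) hα
  rw [queueCost, max_eq_left (sub_nonneg.2 hQ.1), max_eq_left (sub_nonneg.2 hQ.2),
    mul_exp_add_mul_exp_eq_sqrt_mul_cosh hβ hγ, hmean, hdiff, cosh_neg]

theorem queueCost_optimalQueueLength (hα : α ≠ 0) (hβ : 0 < β) (hγ : 0 < γ)
    (hopt : optimalQueueLength α W_L W_H β γ ∈ Set.Icc W_L W_H) :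
    queueCost α W_L W_H β γ (optimalQueueLength α W_L W_H β γ) =
      2 * √(β * γ) * exp (-α * (W_H - W_L) / 2) := by
  rw [queueCost_eq_mul_cosh hα hβ hγ hopt, sub_self, mul_zero, cosh_zero, mul_one]

theorem queueCost_optimalQueueLength_lt (hα : α ≠ 0) (hβ : 0 < β) (hγ : 0 < γ)
    (hopt : optimalQueueLength α W_L W_H β γ ∈ Set.Icc W_L W_H) {Q : ℝ}
    (hQ : Q ∈ Set.Icc W_L W_H) (hne : Q ≠ optimalQueueLength α W_L W_H β γ) :
    queueCost α W_L W_H β γ (optimalQueueLength α W_L W_H β γ) < queueCost α W_L W_H β γ Q := by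
  rw [queueCost_optimalQueueLength hα hβ hγ hopt, queueCost_eq_mul_cosh hα hβ hγ hQ]
  exact lt_mul_of_one_lt_right (by positivity)
    (one_lt_cosh.2 (mul_ne_zero hα (sub_ne_zero.2 hne)))

theorem queue_cost_min_general (hα : 0 < α) (hβ : 0 < β) (hγ : 0 < γ)
    (hlow : exp ((W_L - W_H) * α) < β / γ) (hhigh : β / γ < exp ((W_H - W_L) * α)) :
    let chat := queueCost α W_L W_H β γ
    let Q0 := optimalQueueLength α W_L W_H β γ
    Q0 ∈ Set.Ioo W_L W_H ∧
    (∀ Q ∈ Set.Icc W_L W_H, chat Q0 ≤ chat Q) ∧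
    (∀ Q ∈ Set.Icc W_L W_H, chat Q = chat Q0 → Q = Q0) ∧
    chat Q0 = 2 * √(β * γ) * exp (-α * (W_H - W_L) / 2) := by
  intro chat Q0
  have hmem : Q0 ∈ Set.Ioo W_L W_H :=
    (optimalQueueLength_mem_Ioo_iff hα hβ hγ).2 ⟨hlow, hhigh⟩
  have hopt : Q0 ∈ Set.Icc W_L W_H := Set.Ioo_subset_Icc_self hmem
  have hlt : ∀ Q ∈ Set.Icc W_L W_H, Q ≠ Q0 → chat Q0 < chat Q := fun _ hQ hne ↦
    queueCost_optimalQueueLength_lt hα.ne' hβ hγ hopt hQ hne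
  refine ⟨hmem, fun Q hQ ↦ ?_, fun Q hQ heq ↦ ?_,
    queueCost_optimalQueueLength hα.ne' hβ hγ hopt⟩
  · obtain rfl | hne := eq_or_ne Q Q0
    · exact le_rfl
    · exact (hlt Q hQ hne).le
  · by_contra hne
    exact (hlt Q hQ hne).ne' heq

end QueueCost

/-- The per-user per-stage queue cost
`ĉ(Q) = β e^{−α(Q−W_L)⁺} + γ e^{−α(W_H−Q)⁺}` restricted to `[W_L, W_H]` attains its
minimum uniquely at `Q° = (log β − log γ)/(2α) + (W_L + W_H)/2 ∈ (W_L, W_H)`, with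
minimum value `2√(βγ) e^{−α(W_H−W_L)/2}`, provided
`e^{(W_L−W_H)α} < β/γ < e^{(W_H−W_L)α}`. -/
theorem queue_cost_min (α W_L W_H β γ : ℝ) (hα : 0 < α) (hWL : 0 ≤ W_L) (hW : W_L < W_H)
    (hβ : 0 < β) (hγ : 0 < γ)
    (hlow : exp ((W_L - W_H) * α) < β / γ) (hhigh : β / γ < exp ((W_H - W_L) * α))
    (chat : ℝ → ℝ)
    (hchat : ∀ Q, chat Q = β * exp (-α * max (Q - W_L) 0) + γ * exp (-α * max (W_H - Q) 0))
    (Q0 : ℝ) (hQ0 : Q0 = (log β - log γ) / (2 * α) + (W_L + W_H) / 2) :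
    Q0 ∈ Set.Ioo W_L W_H ∧
    (∀ Q ∈ Set.Icc W_L W_H, chat Q0 ≤ chat Q) ∧
    (∀ Q ∈ Set.Icc W_L W_H, chat Q = chat Q0 → Q = Q0) ∧
    chat Q0 = 2 * Real.sqrt (β * γ) * exp (-α * (W_H - W_L) / 2) := by
  obtain rfl : chat = queueCost α W_L W_H β γ := funext hchat
  exact hQ0 ▸ queue_cost_min_general hα hβ hγ hlow hhigh
end

section
/- Let E₁(x) = ∫_x^∞ e^{−t}/t dt for x > 0 (the exponential integral). Fix A > 0, c > 0, μ > 0 and C ∈ ℝ, define g(f) = C + (A · E₁(−c/f) − μ) · f − (A c) · ((f/c) e^{c/f} + E₁(−c/f)) for f < 0, and let λ̃ < 0 be the unique negative solution of A · E₁(−c/λ) = μ. Then g is strictly increasing on (−∞, λ̃], g(f) → −∞ as f → −∞, and consequently for every θ ≤ g(λ̃) there exists a unique f ∈ (−∞, λ̃] with g(f) = θ. -/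
open Real

/-- The exponential integral `E₁(x) = ∫_x^∞ e^{−t}/t dt`. -/
noncomputable def E1 (x : ℝ) : ℝ := ∫ t in Set.Ioi x, Real.exp (-t) / t

/-! Since `d/df E₁(-c/f) = e^{c/f}/f`, all terms of `g'` other than `A E₁(-c/f) - μ` cancel. As
`E₁` is strictly decreasing, so is `g'` on `(-∞, 0)`; thus `g` is strictly concave there, and its
derivative vanishes at `λ̃`. A strictly concave function is strictly increasing to the left of a
critical point, and, lying below the leftward extension of an increasing chord, it tends to `-∞` at
`-∞`. The intermediate value theorem does the rest. -/

section

open Set Filter MeasureTheory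

section RealFunctions

theorem existsUnique_mem_Iic_eq_of_strictMonoOn {α β : Type*}
    [ConditionallyCompleteLinearOrder α] [DenselyOrdered α] [TopologicalSpace α] [OrderTopology α]
    [LinearOrder β] [TopologicalSpace β] [OrderClosedTopology β]
    {f : α → β} {a : α} {y : β} (hmono : StrictMonoOn f (Iic a)) (hcont : ContinuousOn f (Iic a))
    (hbot : Tendsto f atBot atBot) (hy : y ≤ f a) : ∃! x, x ∈ Iic a ∧ f x = y := by
  obtain ⟨x, hx, rfl⟩ := intermediate_value_Iic hcont hbot hy
  exact ⟨x, ⟨hx, rfl⟩, fun z ⟨hz, hzx⟩ ↦ hmono.injOn hz hx hzx⟩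

theorem tendsto_atBot_atBot_of_concaveOn_Iic {𝕜 : Type*} [Field 𝕜] [LinearOrder 𝕜]
    [IsStrictOrderedRing 𝕜] {f : 𝕜 → 𝕜} {a x y : 𝕜} (hf : ConcaveOn 𝕜 (Iic a) f) (hxy : x < y)
    (hya : y ≤ a) (hfxy : f x < f y) : Tendsto f atBot atBot := by
  set m := (f y - f x) / (y - x)
  have hm : 0 < m := div_pos (sub_pos.2 hfxy) (sub_pos.2 hxy)
  have hchord : Tendsto (fun z ↦ m * z + (f x - m * x)) atBot atBot :=
    tendsto_atBot_add_const_right _ _ (tendsto_id.const_mul_atBot hm)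
  refine tendsto_atBot_mono' _ ?_ hchord
  filter_upwards [eventually_lt_atBot x] with z hzx
  have hslope : m ≤ (f x - f z) / (x - z) :=
    hf.slope_anti_adjacent ((hzx.trans hxy).le.trans hya) hya hzx hxy
  rw [le_div_iff₀ (sub_pos.2 hzx)] at hslope
  linarith

theorem strictMonoOn_inter_Iic_of_strictConcaveOn {f : ℝ → ℝ} {f' a : ℝ} {s : Set ℝ}
    (hf : StrictConcaveOn ℝ s f) (ha : a ∈ s) (hderiv : HasDerivWithinAt f f' s a)
    (hf' : 0 ≤ f') : StrictMonoOn f (s ∩ Iic a) := by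
  have lt_apply_right {x : ℝ} (hx : x ∈ s) (hxa : x < a) : f x < f a := by
    rw [← slope_pos_iff_of_le hxa.le]
    exact hf'.trans_lt (hf.lt_slope_of_hasDerivWithinAt hx ha hxa hderiv)
  rintro x ⟨hx, -⟩ y ⟨hy, hya : y ≤ a⟩ hxy
  obtain rfl | hya := hya.eq_or_lt
  · exact lt_apply_right hx hxy
  · exact hf.concaveOn.strictMonoOn ha hya (lt_apply_right hy hya) ⟨hx, hxy.le⟩
      ⟨hy, self_mem_Iic⟩ hxy

theorem hasDerivAt_integral_Ioi {E : Type*} [NormedAddCommGroup E] [NormedSpace ℝ E]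
    [CompleteSpace E] {f : ℝ → E} {a b : ℝ} (hint : IntegrableOn f (Ioi a)) (hab : a < b)
    (hcont : ContinuousAt f b) : HasDerivAt (fun x ↦ ∫ t in Ioi x, f t) (-f b) b := by
  have hprim : HasDerivAt (fun x ↦ ∫ t in a..x, f t) (f b) b :=
    intervalIntegral.integral_hasDerivAt_right
      ((intervalIntegrable_iff_integrableOn_Ioc_of_le hab.le).2
        (hint.mono_set Ioc_subset_Ioi_self))
      ⟨Ioi a, Ioi_mem_nhds hab, hint.aestronglyMeasurable⟩ hcont
  refine (hprim.const_sub (∫ t in Ioi a, f t)).congr_of_eventuallyEq ?_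
  filter_upwards [Ioi_mem_nhds hab] with x hx
  rw [← intervalIntegral.integral_Ioi_sub_Ioi hint (le_of_lt hx), sub_sub_cancel]

end RealFunctions

section ExponentialIntegral

theorem continuousAt_exp_neg_div {x : ℝ} (hx : x ≠ 0) : ContinuousAt (fun t ↦ exp (-t) / t) x := by
  fun_prop (disch := exact hx)

theorem integrableOn_exp_neg_div_Ioi {a : ℝ} (ha : 0 < a) :
    IntegrableOn (fun t ↦ exp (-t) / t) (Ioi a) := by
  refine integrable_of_isBigO_exp_neg one_pos
    (fun t ht ↦ (continuousAt_exp_neg_div (ha.trans_le ht).ne').continuousWithinAt) ?_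
  refine .of_bound 1 ?_
  filter_upwards [eventually_ge_atTop 1] with t ht
  rw [norm_div, one_mul, neg_one_mul]
  exact div_le_self (norm_nonneg _) (ht.trans (le_abs_self t))

theorem hasDerivAt_E1 {x : ℝ} (hx : 0 < x) : HasDerivAt E1 (-(exp (-x) / x)) x :=
  hasDerivAt_integral_Ioi (integrableOn_exp_neg_div_Ioi (half_pos hx)) (half_lt_self hx)
    (continuousAt_exp_neg_div hx.ne')

theorem strictAntiOn_E1 : StrictAntiOn E1 (Ioi 0) := by
  refine strictAntiOn_of_hasDerivWithinAt_neg (f' := fun x ↦ -(exp (-x) / x)) (convex_Ioi 0)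
    (fun x hx ↦ (hasDerivAt_E1 hx).continuousAt.continuousWithinAt)
    (fun x hx ↦ (hasDerivAt_E1 (interior_subset hx)).hasDerivWithinAt) fun x hx ↦ ?_
  exact neg_neg_of_pos (div_pos (exp_pos _) (interior_subset hx))

variable {c f : ℝ}

theorem hasDerivAt_E1_neg_div (h : 0 < -c / f) :
    HasDerivAt (fun f ↦ E1 (-c / f)) (exp (c / f) / f) f := by
  have hc : c ≠ 0 := by rintro rfl; simp at h
  have hf : f ≠ 0 := by rintro rfl; simp at h
  have hdiv : HasDerivAt (fun f ↦ -c / f) (c / f ^ 2) f := by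
    simpa [div_eq_mul_inv] using (hasDerivAt_inv hf).const_mul (-c)
  refine ((hasDerivAt_E1 h).comp f hdiv).congr_deriv ?_
  rw [neg_div, neg_neg]
  field_simp

theorem strictAntiOn_E1_neg_div (hc : 0 < c) : StrictAntiOn (fun f ↦ E1 (-c / f)) (Iio 0) := by
  intro x hx y hy hxy
  refine strictAntiOn_E1 (div_pos_of_neg_of_neg (neg_neg_of_pos hc) hx)
    (div_pos_of_neg_of_neg (neg_neg_of_pos hc) hy) ?_
  simp only [div_eq_mul_inv]
  exact mul_lt_mul_of_neg_left ((inv_lt_inv_of_neg hy hx).2 hxy) (neg_neg_of_pos hc)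

end ExponentialIntegral

section BellmanEquation

/-- The left-hand side of the approximate Bellman equation (17), as a function of the unknown `f`,
for fixed parameters `A`, `c`, `μ = μ_k(x)` and `C = ĉ_k(x)`. Only `f < 0` is meaningful. -/
noncomputable def bellmanLHS (A c μ C f : ℝ) : ℝ :=
  C + (A * E1 (-c / f) - μ) * f - (A * c) * ((f / c) * exp (c / f) + E1 (-c / f))

variable {A c μ C f : ℝ}

theorem hasDerivAt_bellmanLHS (h : 0 < -c / f) :
    HasDerivAt (bellmanLHS A c μ C) (A * E1 (-c / f) - μ) f := by
  have hc : c ≠ 0 := by rintro rfl; simp at h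
  have hf : f ≠ 0 := by rintro rfl; simp at h
  have hE := hasDerivAt_E1_neg_div h
  have hexp : HasDerivAt (fun f ↦ exp (c / f)) (exp (c / f) * (-c / f ^ 2)) f := by
    simpa [div_eq_mul_inv] using ((hasDerivAt_inv hf).const_mul c).exp
  have hlinear := ((hE.const_mul A).sub_const μ).mul (hasDerivAt_id f)
  have hremainder := ((((hasDerivAt_id f).div_const c).mul hexp).add hE).const_mul (A * c)
  refine ((hlinear.const_add C).sub hremainder).congr_deriv ?_
  simp only [id]
  field_simp
  ring

theorem strictConcaveOn_bellmanLHS (hA : 0 < A) (hc : 0 < c) :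
    StrictConcaveOn ℝ (Iio 0) (bellmanLHS A c μ C) := by
  have hderiv (f : ℝ) (hf : f ∈ Iio 0) :
      HasDerivAt (bellmanLHS A c μ C) (A * E1 (-c / f) - μ) f :=
    hasDerivAt_bellmanLHS (div_pos_of_neg_of_neg (neg_neg_of_pos hc) hf)
  refine StrictAntiOn.strictConcaveOn_of_deriv (convex_Iio 0)
    (fun f hf ↦ (hderiv f hf).continuousAt.continuousWithinAt) ?_
  rw [interior_Iio]
  intro x hx y hy hxy
  rw [(hderiv x hx).deriv, (hderiv y hy).deriv]
  gcongr
  exact strictAntiOn_E1_neg_div hc hx hy hxy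

end BellmanEquation

end

/-- With `g(f) = C + (A·E₁(−c/f) − μ)·f − A c·((f/c) e^{c/f} + E₁(−c/f))` and `λ̃ < 0`
the unique negative solution of `A·E₁(−c/λ) = μ`, the function `g` is strictly increasing
on `(−∞, λ̃]`, tends to `−∞` as `f → −∞`, and for every `θ ≤ g(λ̃)` the equation
`g(f) = θ` has a unique solution `f ∈ (−∞, λ̃]`. -/
theorem bellman_lhs_unique_solution (A c μ C : ℝ) (hA : 0 < A) (hc : 0 < c) (hμ : 0 < μ)
    (g : ℝ → ℝ)
    (hg : ∀ f : ℝ, g f = C + (A * E1 (-c / f) - μ) * f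
        - (A * c) * ((f / c) * Real.exp (c / f) + E1 (-c / f)))
    (lam : ℝ) (hlam_neg : lam < 0) (hlam : A * E1 (-c / lam) = μ) :
    StrictMonoOn g (Set.Iic lam) ∧
    Filter.Tendsto g Filter.atBot Filter.atBot ∧
    ∀ θ : ℝ, θ ≤ g lam → ∃! f : ℝ, f ∈ Set.Iic lam ∧ g f = θ := by
  obtain rfl : g = bellmanLHS A c μ C := funext hg
  have hsub : Set.Iic lam ⊆ Set.Iio 0 := Set.Iic_subset_Iio.2 hlam_neg
  have hconc : StrictConcaveOn ℝ (Set.Iio 0) (bellmanLHS A c μ C) :=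
    strictConcaveOn_bellmanLHS hA hc
  have hcrit : HasDerivAt (bellmanLHS A c μ C) 0 lam :=
    (hasDerivAt_bellmanLHS (div_pos_of_neg_of_neg (neg_neg_of_pos hc) hlam_neg)).congr_deriv
      (sub_eq_zero.2 hlam)
  have hmono : StrictMonoOn (bellmanLHS A c μ C) (Set.Iic lam) := by
    simpa only [Set.inter_eq_right.2 hsub] using
      strictMonoOn_inter_Iic_of_strictConcaveOn hconc hlam_neg hcrit.hasDerivWithinAt le_rfl
  have htend : Filter.Tendsto (bellmanLHS A c μ C) Filter.atBot Filter.atBot :=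
    tendsto_atBot_atBot_of_concaveOn_Iic (hconc.concaveOn.subset hsub (convex_Iic lam))
      (sub_one_lt lam) le_rfl
      (hmono (sub_one_lt lam).le Set.self_mem_Iic (sub_one_lt lam))
  have hcont : ContinuousOn (bellmanLHS A c μ C) (Set.Iic lam) :=
    (hconc.concaveOn.continuousOn isOpen_Iio).mono hsub
  exact ⟨hmono, htend, fun θ hθ ↦ existsUnique_mem_Iic_eq_of_strictMonoOn hmono hcont htend hθ⟩
end

section
/- Let L, K ≥ 1, let π : {1,…,K} → {1,…,L}, and let A > 0, d ≥ 0 and c ≥ 1. Define ξ(q) = (1 + min_{1≤k≤K} q_{π(k)})/2 for q ∈ ℝ^L, and U(q) = A · ξ(q) · e^{c/ξ(q)} − d · ξ(q). Then U is convex on the cube [0,1]^L. -/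
open Real

/-!
The perspective `t * exp (c / t)` of the exponential is convex in `t > 0`, so the cost is a convex
function of `ξ`. Its slope at `ξ = 1` is `A * exp c * (1 - c) - d`; when this is nonpositive,
convexity makes the cost decreasing on `(0, 1]`. As a minimum of coordinates, `ξ` is concave in `q`
and takes values in `[1/2, 1]`, and a convex decreasing function of a concave one is convex.
-/

open Set

section Convexity

variable {𝕜 E β ι : Type*} [Field 𝕜] [LinearOrder 𝕜] [AddCommMonoid E] [Module 𝕜 E]

lemma convexOn_perspective [IsStrictOrderedRing 𝕜] [AddCommMonoid β] [PartialOrder β]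
    [Module 𝕜 β] [PosSMulMono 𝕜 β] {s : Set E} {f : E → β} (hf : ConvexOn 𝕜 s f) :
    ConvexOn 𝕜 {p : 𝕜 × E | 0 < p.1 ∧ p.1⁻¹ • p.2 ∈ s} fun p => p.1 • f (p.1⁻¹ • p.2) := by
  have combo ⦃p : 𝕜 × E⦄ (hp : 0 < p.1 ∧ p.1⁻¹ • p.2 ∈ s) ⦃q : 𝕜 × E⦄
      (hq : 0 < q.1 ∧ q.1⁻¹ • q.2 ∈ s) ⦃a b : 𝕜⦄ (ha : 0 < a) (hb : 0 < b) :
      (0 < (a • p + b • q).1 ∧ (a • p + b • q).1⁻¹ • (a • p + b • q).2 ∈ s) ∧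
        (a • p + b • q).1 • f ((a • p + b • q).1⁻¹ • (a • p + b • q).2) ≤
          a • p.1 • f (p.1⁻¹ • p.2) + b • q.1 • f (q.1⁻¹ • q.2) := by
    obtain ⟨t₁, x₁⟩ := p
    obtain ⟨t₂, x₂⟩ := q
    obtain ⟨ht₁ : 0 < t₁, hx₁ : t₁⁻¹ • x₁ ∈ s⟩ := hp
    obtain ⟨ht₂ : 0 < t₂, hx₂ : t₂⁻¹ • x₂ ∈ s⟩ := hq
    simp only [Prod.fst_add, Prod.snd_add, Prod.smul_fst, Prod.smul_snd, smul_eq_mul]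
    set t := a * t₁ + b * t₂ with ht_def
    have ht : 0 < t := by positivity
    have hw₁ : 0 ≤ t⁻¹ * (a * t₁) := by positivity
    have hw₂ : 0 ≤ t⁻¹ * (b * t₂) := by positivity
    have hw : t⁻¹ * (a * t₁) + t⁻¹ * (b * t₂) = 1 := by
      rw [← mul_add, ← ht_def, inv_mul_cancel₀ ht.ne']
    have hx : t⁻¹ • (a • x₁ + b • x₂) =
        (t⁻¹ * (a * t₁)) • t₁⁻¹ • x₁ + (t⁻¹ * (b * t₂)) • t₂⁻¹ • x₂ := by
      simp only [smul_add, smul_smul, mul_assoc, mul_inv_cancel₀ ht₁.ne',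
        mul_inv_cancel₀ ht₂.ne', mul_one]
    rw [hx]
    refine ⟨⟨ht, hf.1 hx₁ hx₂ hw₁ hw₂ hw⟩, ?_⟩
    simpa only [smul_add, smul_smul, mul_inv_cancel_left₀ ht.ne'] using
      smul_le_smul_of_nonneg_left (hf.2 hx₁ hx₂ hw₁ hw₂ hw) ht.le
  exact convexOn_iff_forall_pos.2
    ⟨convex_iff_forall_pos.2 fun _ hp _ hq _ _ ha hb _ => (combo hp hq ha hb).1,
      fun _ hp _ hq _ _ ha hb _ => (combo hp hq ha hb).2⟩

lemma concaveOn_finset_inf' [AddCommMonoid β] [LinearOrder β] [IsOrderedAddMonoid β] [Module 𝕜 β]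
    [PosSMulStrictMono 𝕜 β] {s : Set E} {t : Finset ι} (ht : t.Nonempty) {f : ι → E → β}
    (hf : ∀ i ∈ t, ConcaveOn 𝕜 s (f i)) : ConcaveOn 𝕜 s (t.inf' ht f) :=
  Finset.inf'_induction ht f (fun _ hg _ hh => hg.inf hh) hf

end Convexity

lemma convexOn_mul_exp_div (c : ℝ) : ConvexOn ℝ (Ioi 0) fun x => x * exp (c / x) := by
  have h := (convexOn_perspective convexOn_exp).comp_affineMap
    ((AffineMap.id ℝ ℝ).prod (AffineMap.const ℝ ℝ c))
  refine (h.subset (fun x hx => ⟨hx, mem_univ _⟩) (convex_Ioi 0)).congr fun x _ => ?_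
  simp [div_eq_inv_mul]

lemma antitoneOn_of_convexOn_of_hasDerivWithinAt_nonpos {s : Set ℝ} {f : ℝ → ℝ} {b f' : ℝ}
    (hf : ConvexOn ℝ s f) (hb : b ∈ s) (hf' : HasDerivWithinAt f f' (Iio b) b)
    (hf'_nonpos : f' ≤ 0) : AntitoneOn f (s ∩ Iic b) := by
  have le_left {x : ℝ} (hx : x ∈ s) (hxb : x ≤ b) : f b ≤ f x := by
    obtain rfl | hlt := hxb.eq_or_lt
    · rfl
    · have hslope : slope f x b ≤ 0 :=
        (hf.slope_le_of_hasDerivWithinAt_Iio hx hb hlt hf').trans hf'_nonpos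
      rw [slope_def_field, div_le_iff₀ (sub_pos.2 hlt), zero_mul] at hslope
      exact sub_nonpos.1 hslope
  rintro x ⟨hx, hxb⟩ y ⟨-, hyb⟩ hxy
  exact (hf.le_max_of_mem_Icc hx hb ⟨hxy, hyb⟩).trans (max_le le_rfl (le_left hx hxb))

/-- The paper's `ξ(q) = (1 + min_k q_{π_k}) / 2`, a function of the cache control vector `q`, where
`k` ranges over a nonempty finite set and `urp` is the paper's `π`. -/
noncomputable def cacheFactor {ι κ : Type*} {s : Finset κ} (hs : s.Nonempty) (urp : κ → ι)
    (q : ι → ℝ) : ℝ :=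
  (1 + s.inf' hs fun k => q (urp k)) / 2

section CacheFactor

variable {ι κ : Type*} {s : Finset κ} (hs : s.Nonempty) (urp : κ → ι)

lemma concaveOn_cacheFactor : ConcaveOn ℝ univ (cacheFactor hs urp) := by
  have hmin : ConcaveOn ℝ univ (s.inf' hs fun k (q : ι → ℝ) => q (urp k)) :=
    concaveOn_finset_inf' hs fun k _ => (LinearMap.proj (R := ℝ) (urp k)).concaveOn convex_univ
  refine ((hmin.add_const 1).smul (by norm_num : (0 : ℝ) ≤ 1 / 2)).congr fun q _ => ?_
  simp only [cacheFactor, Pi.add_apply, Finset.inf'_apply, smul_eq_mul]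
  ring

lemma image_cacheFactor_Icc : cacheFactor hs urp '' Icc 0 1 = Icc (1 / 2) 1 := by
  apply Subset.antisymm
  · rintro _ ⟨q, ⟨hq0, hq1⟩, rfl⟩
    have ⟨k, hk⟩ := hs
    have hmin0 : 0 ≤ s.inf' hs fun k => q (urp k) := Finset.le_inf' _ _ fun k _ => hq0 (urp k)
    have hmin1 : (s.inf' hs fun k => q (urp k)) ≤ 1 := (Finset.inf'_le _ hk).trans (hq1 (urp k))
    constructor <;> unfold cacheFactor <;> linarith
  · rintro x ⟨hx0, hx1⟩
    refine ⟨fun _ => 2 * x - 1, ⟨fun _ => ?_, fun _ => ?_⟩, ?_⟩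
    · simp only [Pi.zero_apply]; linarith
    · simp only [Pi.one_apply]; linarith
    · simp [cacheFactor]

end CacheFactor

/-- One summand of the paper's per-URP cost as a function of `x = ξ(q)` alone, up to an additive
constant: `A` is `e^{-a₁}`, `c` is `μ₀ ln 2 / B_W`, and `d` is `a₂ + e`. -/
noncomputable def cacheCost (A d c x : ℝ) : ℝ :=
  A * x * exp (c / x) - d * x

section CacheCost

variable {A : ℝ} (d c : ℝ)

lemma convexOn_cacheCost (hA : 0 ≤ A) : ConvexOn ℝ (Ioi 0) (cacheCost A d c) := by
  have hlin : ConcaveOn ℝ (Ioi 0) fun x : ℝ => d * x :=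
    (LinearMap.mulLeft ℝ d).concaveOn (convex_Ioi 0)
  refine (((convexOn_mul_exp_div c).smul hA).sub hlin).congr fun x _ => ?_
  simp only [cacheCost, Pi.sub_apply, smul_eq_mul, mul_assoc]

lemma hasDerivAt_cacheCost {x : ℝ} (hx : x ≠ 0) :
    HasDerivAt (cacheCost A d c) (A * exp (c / x) * (1 - c / x) - d) x := by
  have hdiv : HasDerivAt (fun y => c / y) (-c / x ^ 2) x := by
    simpa using (hasDerivAt_const x c).fun_div (hasDerivAt_id' x) hx
  have h := (((hasDerivAt_id' x).const_mul A).fun_mul hdiv.exp).fun_sub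
    ((hasDerivAt_id' x).const_mul d)
  refine h.congr_deriv ?_
  field_simp
  ring

variable {d c}

lemma antitoneOn_cacheCost (hA : 0 ≤ A) (hd : A * exp c * (1 - c) ≤ d) :
    AntitoneOn (cacheCost A d c) (Ioc 0 1) :=
  antitoneOn_of_convexOn_of_hasDerivWithinAt_nonpos (convexOn_cacheCost d c hA) (mem_Ioi.2 one_pos)
    (hasDerivAt_cacheCost d c one_ne_zero).hasDerivWithinAt
    (by simpa only [div_one, sub_nonpos] using hd)

end CacheCost

theorem convexOn_cache_cost_general {ι κ : Type*} {s : Finset κ} (hs : s.Nonempty) (urp : κ → ι)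
    {A d c : ℝ} (hA : 0 ≤ A) (hd : A * exp c * (1 - c) ≤ d) :
    ConvexOn ℝ (Icc (0 : ι → ℝ) 1) fun q => cacheCost A d c (cacheFactor hs urp q) := by
  have hpos : Icc (1 / 2 : ℝ) 1 ⊆ Ioc 0 1 := Icc_subset_Ioc (by norm_num) le_rfl
  have hconcave : ConcaveOn ℝ (Icc (0 : ι → ℝ) 1) (cacheFactor hs urp) :=
    (concaveOn_cacheFactor hs urp).subset (subset_univ _) (convex_Icc _ _)
  have hconvex : ConvexOn ℝ (cacheFactor hs urp '' Icc 0 1) (cacheCost A d c) := by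
    rw [image_cacheFactor_Icc]
    exact (convexOn_cacheCost d c hA).subset (hpos.trans Ioc_subset_Ioi_self) (convex_Icc _ _)
  have hanti : AntitoneOn (cacheCost A d c) (cacheFactor hs urp '' Icc 0 1) := by
    rw [image_cacheFactor_Icc]
    exact (antitoneOn_cacheCost hA hd).mono hpos
  exact hconvex.comp_concaveOn hconcave hanti

/-- Convexity of the approximate cache cost: with
`ξ(q) = (1 + min_{1≤k≤K} q_{urp(k)})/2` and `U(q) = A·ξ(q)·e^{c/ξ(q)} − d·ξ(q)`
(`A > 0`, `d ≥ 0`, `c ≥ 1`), the function `U` is convex on the cube `[0,1]^L`. -/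
theorem convexOn_cache_cost (L K : ℕ) (hL : 1 ≤ L) (hK : 1 ≤ K)
    (hKne : (Finset.univ : Finset (Fin K)).Nonempty)
    (urp : Fin K → Fin L) (A d c : ℝ) (hA : 0 < A) (hd : 0 ≤ d) (hc : 1 ≤ c)
    (ξ : (Fin L → ℝ) → ℝ)
    (hξ : ∀ q, ξ q = (1 + Finset.univ.inf' hKne (fun k => q (urp k))) / 2)
    (U : (Fin L → ℝ) → ℝ)
    (hU : ∀ q, U q = A * ξ q * Real.exp (c / ξ q) - d * ξ q) :
    ConvexOn ℝ (Set.Icc (0 : Fin L → ℝ) 1) U := by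
  have hslope : A * exp c * (1 - c) ≤ d :=
    (mul_nonpos_of_nonneg_of_nonpos (by positivity) (sub_nonpos.2 hc)).trans hd
  exact (convexOn_cache_cost_general hKne urp hA.le hslope).congr fun q _ => by
    simp only [hU, hξ, cacheCost, cacheFactor]
end
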